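/- Correctness of the bidirectional type system, inference part: if Γ ⊢ a ⇒ A and ⊢ Γ, then Γ ⊢ a : A. -/

import Mathlib

/-!
Since the declarative system has no conversion rule, soundness rests on regularity: an inferred
type is itself a type, and a checked type is assumed to be one. The two facts, proved together by
mutual induction for well-formed `Γ`, are

* `Γ ⊢ a ⇒ A` implies `Γ ⊢ a : A` and `Γ ⊢ A : Type`;
* `Γ ⊢ a ⇐ A` and `Γ ⊢ A : Type` imply `Γ ⊢ a : A`.

Inverting `Γ ⊢ (x:A) → B : Type` provides the premises about `A` and `B` needed to check
λ-abstractions and arguments. Regularity of variables is weakening, and regularity of applications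
is the substitution lemma. Both are instances of stability of typing under parallel renamings and
substitutions (`HasType.ren`, `HasType.sub`), to which `lift` and `subst` are reduced by
`Tm.lift_eq_ren` and `Tm.subst_eq_sub`.
-/

/-- Terms of the core pi-forall language, with de Bruijn indices for variables.
    `lam a` binds one variable in `a`, and `pi A B` binds one variable in `B`.
    (De Bruijn representation identifies terms up to α-equivalence.) -/
inductive Tm : Type
  | var : Nat → Tm
  | lam : Tm → Tm
  | app : Tm → Tm → Tm
  | pi  : Tm → Tm → Tm
  | type : Tm
  | annot : Tm → Tm → Tm
  deriving DecidableEq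

namespace Tm

/-- `lift d c t` shifts by `d` every variable of `t` whose index is at least `c`. -/
def lift (d c : Nat) : Tm → Tm
  | var k => if k < c then var k else var (k + d)
  | lam a => lam (lift d (c + 1) a)
  | app a b => app (lift d c a) (lift d c b)
  | pi A B => pi (lift d c A) (lift d (c + 1) B)
  | type => type
  | annot a A => annot (lift d c a) (lift d c A)

/-- `subst a x b` is the capture-avoiding substitution `b[a/x]` of `a`
    for variable `x` in `b` (indices above `x` are decremented). -/
def subst (a : Tm) (x : Nat) : Tm → Tm
  | var k => if k = x then lift x 0 a else if x < k then var (k - 1) else var k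
  | lam b => lam (subst a (x + 1) b)
  | app b c => app (subst a x b) (subst a x c)
  | pi A B => pi (subst a x A) (subst a (x + 1) B)
  | type => type
  | annot b A => annot (subst a x b) (subst a x A)

end Tm

/-- A typing context is a list of types; the head is the type of variable 0. -/
abbrev Ctx := List Tm

/-- `lookupTy Γ x = some A` means `x : A ∈ Γ` (with the type suitably shifted
    so that it is well-scoped in the whole context `Γ`). -/
def lookupTy : Ctx → Nat → Option Tm
  | [], _ => none
  | A :: _, 0 => some (Tm.lift 1 0 A)
  | _ :: Γ, k + 1 => (lookupTy Γ k).map (Tm.lift 1 0)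

/-- The declarative typing judgment `Γ ⊢ a : A`. -/
inductive HasType : Ctx → Tm → Tm → Prop
  | var {Γ x A} : lookupTy Γ x = some A → HasType Γ (.var x) A
  | type {Γ} : HasType Γ .type .type
  | pi {Γ A B} : HasType Γ A .type → HasType (A :: Γ) B .type →
      HasType Γ (.pi A B) .type
  | lam {Γ A a B} : HasType (A :: Γ) a B → HasType Γ A .type →
      HasType Γ (.lam a) (.pi A B)
  | app {Γ a b A B} : HasType Γ a (.pi A B) → HasType Γ b A →
      HasType Γ (.app a b) (Tm.subst b 0 B)
  | annot {Γ a A} : HasType Γ a A → HasType Γ A .type →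
      HasType Γ (.annot a A) A

/-- The judgment `⊢ Γ`: the context type checks. -/
inductive CtxWf : Ctx → Prop
  | nil : CtxWf []
  | cons {Γ A} : CtxWf Γ → HasType Γ A .type → CtxWf (A :: Γ)

mutual
/-- The bidirectional inference judgment `Γ ⊢ a ⇒ A`. -/
inductive Infers : Ctx → Tm → Tm → Prop
  | var {Γ x A} : lookupTy Γ x = some A → Infers Γ (.var x) A
  | type {Γ} : Infers Γ .type .type
  | pi {Γ A B} : Checks Γ A .type → Checks (A :: Γ) B .type →
      Infers Γ (.pi A B) .type
  | app {Γ a b A B} : Infers Γ a (.pi A B) → Checks Γ b A →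
      Infers Γ (.app a b) (Tm.subst b 0 B)
  | annot {Γ a A} : Checks Γ A .type → Checks Γ a A →
      Infers Γ (.annot a A) A

/-- The bidirectional checking judgment `Γ ⊢ a ⇐ A`. -/
inductive Checks : Ctx → Tm → Tm → Prop
  | lam {Γ A a B} : Checks (A :: Γ) a B → Checks Γ (.lam a) (.pi A B)
  | infer {Γ a A} : (∀ b, a ≠ .lam b) → Infers Γ a A → Checks Γ a A
end

namespace Tm

/-- Extension of a renaming under one binder. -/
def upRen (ξ : Nat → Nat) : Nat → Nat
  | 0 => 0
  | k + 1 => ξ k + 1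

/-- Parallel renaming of the free variables of a term. -/
def ren (ξ : Nat → Nat) : Tm → Tm
  | var k => var (ξ k)
  | lam a => lam (ren (upRen ξ) a)
  | app a b => app (ren ξ a) (ren ξ b)
  | pi A B => pi (ren ξ A) (ren (upRen ξ) B)
  | type => type
  | annot a A => annot (ren ξ a) (ren ξ A)

/-- Extension of a parallel substitution under one binder. -/
def upSub (σ : Nat → Tm) : Nat → Tm
  | 0 => var 0
  | k + 1 => ren Nat.succ (σ k)

/-- Parallel capture-avoiding substitution. -/
def sub (σ : Nat → Tm) : Tm → Tm
  | var k => σ k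
  | lam a => lam (sub (upSub σ) a)
  | app a b => app (sub σ a) (sub σ b)
  | pi A B => pi (sub σ A) (sub (upSub σ) B)
  | type => type
  | annot a A => annot (sub σ a) (sub σ A)

/-- The substitution replacing variable `0` by `b` and lowering all other variables. -/
def single (b : Tm) : Nat → Tm
  | 0 => b
  | k + 1 => var k

/-! ### Composition laws for renamings and substitutions -/

theorem upRen_comp (ξ ζ : Nat → Nat) : upRen ζ ∘ upRen ξ = upRen (ζ ∘ ξ) := by
  funext k; cases k <;> rfl

theorem ren_ren (t : Tm) (ξ ζ : Nat → Nat) : ren ζ (ren ξ t) = ren (ζ ∘ ξ) t := by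
  induction t generalizing ξ ζ <;> simp_all [ren, upRen_comp]

theorem upSub_upRen (ξ : Nat → Nat) (σ : Nat → Tm) : upSub σ ∘ upRen ξ = upSub (σ ∘ ξ) := by
  funext k; cases k <;> rfl

theorem sub_ren (t : Tm) (ξ : Nat → Nat) (σ : Nat → Tm) : sub σ (ren ξ t) = sub (σ ∘ ξ) t := by
  induction t generalizing ξ σ <;> simp_all [ren, sub, upSub_upRen]

theorem upRen_upSub (σ : Nat → Tm) (ξ : Nat → Nat) :
    ren (upRen ξ) ∘ upSub σ = upSub (ren ξ ∘ σ) := by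
  funext k
  cases k with
  | zero => rfl
  | succ k =>
    simp only [Function.comp, upSub, ren_ren]
    rfl

theorem ren_sub (t : Tm) (σ : Nat → Tm) (ξ : Nat → Nat) : ren ξ (sub σ t) = sub (ren ξ ∘ σ) t := by
  induction t generalizing ξ σ <;> simp_all [ren, sub, upRen_upSub]

theorem upSub_comp (σ τ : Nat → Tm) : sub (upSub τ) ∘ upSub σ = upSub (sub τ ∘ σ) := by
  funext k
  cases k with
  | zero => rfl
  | succ k =>
    simp only [Function.comp, upSub, sub_ren, ren_sub]
    rfl

theorem sub_sub (t : Tm) (σ τ : Nat → Tm) : sub τ (sub σ t) = sub (sub τ ∘ σ) t := by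
  induction t generalizing σ τ <;> simp_all [sub, upSub_comp]

theorem upSub_var : upSub var = var := by
  funext k; cases k <;> rfl

theorem sub_var (t : Tm) : sub var t = t := by
  induction t <;> simp_all [sub, upSub_var]

/-! ### Single-variable operations as parallel ones -/

theorem upRen_shift (d c : Nat) :
    upRen (fun k => if k < c then k else k + d) = fun k => if k < c + 1 then k else k + d := by
  funext k
  cases k with
  | zero => simp [upRen]
  | succ k =>
    simp only [upRen, Nat.add_lt_add_iff_right]
    split <;> omega

theorem lift_eq_ren (t : Tm) (d c : Nat) :
    lift d c t = ren (fun k => if k < c then k else k + d) t := by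
  induction t generalizing c with
  | var k => simp only [lift, ren]; split <;> rfl
  | _ => simp_all [lift, ren, upRen_shift]

theorem lift_zero_eq_ren (t : Tm) (d : Nat) : lift d 0 t = ren (· + d) t := by
  simp [lift_eq_ren]

theorem upSub_subst (a : Tm) (x : Nat) :
    upSub (fun k => if k = x then lift x 0 a else if x < k then var (k - 1) else var k) =
      fun k => if k = x + 1 then lift (x + 1) 0 a
        else if x + 1 < k then var (k - 1) else var k := by
  funext k
  cases k with
  | zero => simp [upSub]
  | succ k =>
    simp only [upSub, Nat.add_right_cancel_iff, Nat.add_lt_add_iff_right]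
    split
    · simp only [lift_zero_eq_ren, ren_ren]
      rfl
    · split
      · simp only [ren, var.injEq]; omega
      · rfl

theorem subst_eq_sub (t a : Tm) (x : Nat) :
    subst a x t =
      sub (fun k => if k = x then lift x 0 a else if x < k then var (k - 1) else var k) t := by
  induction t generalizing x with
  | var k => rfl
  | _ => simp_all [subst, sub, upSub_subst]

theorem ren_id (t : Tm) : ren (fun k => k) t = t := by
  have h := ren_sub t var (fun k => k)
  rw [sub_var] at h
  rw [h]
  exact sub_var t

theorem subst_zero (t b : Tm) : subst b 0 t = sub (single b) t := by
  rw [subst_eq_sub]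
  congr 1
  funext k
  cases k <;> simp [single, lift_zero_eq_ren, ren_id]

theorem ren_subst_zero (ξ : Nat → Nat) (b B : Tm) :
    ren ξ (subst b 0 B) = subst (ren ξ b) 0 (ren (upRen ξ) B) := by
  rw [subst_zero, subst_zero, ren_sub, sub_ren]
  congr 1
  funext k; cases k <;> rfl

theorem sub_subst_zero (σ : Nat → Tm) (b B : Tm) :
    sub σ (subst b 0 B) = subst (sub σ b) 0 (sub (upSub σ) B) := by
  rw [subst_zero, subst_zero, sub_sub, sub_sub]
  congr 1
  funext k
  cases k with
  | zero => rfl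
  | succ k =>
    simp only [Function.comp, upSub, sub_ren, single, sub]
    exact (sub_var _).symm

theorem ren_lift_one (ξ : Nat → Nat) (A : Tm) :
    ren (upRen ξ) (lift 1 0 A) = lift 1 0 (ren ξ A) := by
  simp only [lift_zero_eq_ren, ren_ren]
  rfl

theorem sub_lift_one (σ : Nat → Tm) (A : Tm) :
    sub (upSub σ) (lift 1 0 A) = lift 1 0 (sub σ A) := by
  simp only [lift_zero_eq_ren, sub_ren, ren_sub]
  rfl

theorem sub_single_lift (b A : Tm) : sub (single b) (lift 1 0 A) = A := by
  rw [lift_zero_eq_ren, sub_ren]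
  exact sub_var A

end Tm

/-! ### Stability of typing under renaming and substitution -/

/-- `ξ` maps each assumption of `Γ` to an assumption of `Δ` of the renamed type. -/
def RenOk (Γ Δ : Ctx) (ξ : Nat → Nat) : Prop :=
  ∀ x A, lookupTy Γ x = some A → lookupTy Δ (ξ x) = some (Tm.ren ξ A)

theorem RenOk.up {Γ Δ : Ctx} {ξ : Nat → Nat} (h : RenOk Γ Δ ξ) (C : Tm) :
    RenOk (C :: Γ) (Tm.ren ξ C :: Δ) (Tm.upRen ξ) := by
  intro x A hx
  cases x with
  | zero =>
    simp only [lookupTy, Option.some.injEq] at hx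
    subst hx
    simp [lookupTy, Tm.upRen, Tm.ren_lift_one]
  | succ x =>
    simp only [lookupTy, Option.map_eq_some_iff] at hx
    obtain ⟨A', hA', rfl⟩ := hx
    simp [lookupTy, Tm.upRen, Tm.ren_lift_one, h x A' hA']

theorem HasType.ren {Γ : Ctx} {a A : Tm} (h : HasType Γ a A) :
    ∀ {Δ : Ctx} {ξ : Nat → Nat}, RenOk Γ Δ ξ → HasType Δ (Tm.ren ξ a) (Tm.ren ξ A) := by
  induction h with
  | var hx => intro Δ ξ hξ; exact .var (hξ _ _ hx)
  | type => intro Δ ξ hξ; exact .type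
  | pi _ _ ihA ihB => intro Δ ξ hξ; exact .pi (ihA hξ) (ihB (hξ.up _))
  | lam _ _ iha ihA => intro Δ ξ hξ; exact .lam (iha (hξ.up _)) (ihA hξ)
  | app _ _ iha ihb =>
    intro Δ ξ hξ
    rw [Tm.ren_subst_zero]
    exact .app (iha hξ) (ihb hξ)
  | annot _ _ iha ihA => intro Δ ξ hξ; exact .annot (iha hξ) (ihA hξ)

theorem HasType.weaken {Γ : Ctx} {a A : Tm} (h : HasType Γ a A) (C : Tm) :
    HasType (C :: Γ) (Tm.lift 1 0 a) (Tm.lift 1 0 A) := by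
  rw [Tm.lift_zero_eq_ren, Tm.lift_zero_eq_ren]
  refine h.ren fun x B hx => ?_
  simp [lookupTy, hx, Tm.lift_zero_eq_ren]

/-- `σ` maps each assumption of `Γ` to a term over `Δ` of the substituted type. -/
def SubOk (Γ Δ : Ctx) (σ : Nat → Tm) : Prop :=
  ∀ x A, lookupTy Γ x = some A → HasType Δ (σ x) (Tm.sub σ A)

theorem SubOk.up {Γ Δ : Ctx} {σ : Nat → Tm} (h : SubOk Γ Δ σ) (C : Tm) :
    SubOk (C :: Γ) (Tm.sub σ C :: Δ) (Tm.upSub σ) := by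
  intro x A hx
  cases x with
  | zero =>
    simp only [lookupTy, Option.some.injEq] at hx
    subst hx
    rw [Tm.sub_lift_one]
    exact .var rfl
  | succ x =>
    simp only [lookupTy, Option.map_eq_some_iff] at hx
    obtain ⟨A', hA', rfl⟩ := hx
    have hw := (h x A' hA').weaken (Tm.sub σ C)
    rw [Tm.lift_zero_eq_ren (σ x)] at hw
    rw [Tm.sub_lift_one]
    exact hw

theorem HasType.sub {Γ : Ctx} {a A : Tm} (h : HasType Γ a A) :
    ∀ {Δ : Ctx} {σ : Nat → Tm}, SubOk Γ Δ σ → HasType Δ (Tm.sub σ a) (Tm.sub σ A) := by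
  induction h with
  | var hx => intro Δ σ hσ; exact hσ _ _ hx
  | type => intro Δ σ hσ; exact .type
  | pi _ _ ihA ihB => intro Δ σ hσ; exact .pi (ihA hσ) (ihB (hσ.up _))
  | lam _ _ iha ihA => intro Δ σ hσ; exact .lam (iha (hσ.up _)) (ihA hσ)
  | app _ _ iha ihb =>
    intro Δ σ hσ
    rw [Tm.sub_subst_zero]
    exact .app (iha hσ) (ihb hσ)
  | annot _ _ iha ihA => intro Δ σ hσ; exact .annot (iha hσ) (ihA hσ)

theorem HasType.subst_type {Γ : Ctx} {b A B : Tm} (hB : HasType (A :: Γ) B .type)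
    (hb : HasType Γ b A) : HasType Γ (Tm.subst b 0 B) .type := by
  rw [Tm.subst_zero]
  refine hB.sub (σ := Tm.single b) fun x C hx => ?_
  cases x with
  | zero =>
    simp only [lookupTy, Option.some.injEq] at hx
    subst hx
    rw [Tm.sub_single_lift]
    exact hb
  | succ x =>
    simp only [lookupTy, Option.map_eq_some_iff] at hx
    obtain ⟨C', hC', rfl⟩ := hx
    rw [Tm.sub_single_lift]
    exact .var hC'

/-! ### Regularity and soundness -/

theorem CtxWf.lookup {Γ : Ctx} (h : CtxWf Γ) :
    ∀ {x : Nat} {A : Tm}, lookupTy Γ x = some A → HasType Γ A .type := by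
  induction h with
  | nil => intro x A hx; simp [lookupTy] at hx
  | cons _ hC ih =>
    intro x A hx
    cases x with
    | zero =>
      simp only [lookupTy, Option.some.injEq] at hx
      subst hx
      exact hC.weaken _
    | succ x =>
      simp only [lookupTy, Option.map_eq_some_iff] at hx
      obtain ⟨A', hA', rfl⟩ := hx
      exact (ih hA').weaken _

theorem HasType.pi_inv {Γ : Ctx} {A B : Tm} (h : HasType Γ (.pi A B) .type) :
    HasType Γ A .type ∧ HasType (A :: Γ) B .type := by
  cases h with
  | pi hA hB => exact ⟨hA, hB⟩

mutual
theorem Infers.sound_regular {Γ : Ctx} {a A : Tm} (h : Infers Γ a A) (hΓ : CtxWf Γ) :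
    HasType Γ a A ∧ HasType Γ A .type := by
  cases h with
  | var hx => exact ⟨.var hx, hΓ.lookup hx⟩
  | type => exact ⟨.type, .type⟩
  | pi hA hB =>
    have hA' := hA.sound hΓ .type
    exact ⟨.pi hA' (hB.sound (.cons hΓ hA') .type), .type⟩
  | app ha hb =>
    obtain ⟨ha', hP⟩ := ha.sound_regular hΓ
    obtain ⟨hA, hB⟩ := hP.pi_inv
    have hb' := hb.sound hΓ hA
    exact ⟨.app ha' hb', hB.subst_type hb'⟩
  | annot hA ha =>
    have hA' := hA.sound hΓ .type
    exact ⟨.annot (ha.sound hΓ hA') hA', hA'⟩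

theorem Checks.sound {Γ : Ctx} {a A : Tm} (h : Checks Γ a A) (hΓ : CtxWf Γ)
    (hT : HasType Γ A .type) : HasType Γ a A := by
  cases h with
  | lam ha =>
    obtain ⟨hA, hB⟩ := hT.pi_inv
    exact .lam (ha.sound (.cons hΓ hA) hB) hA
  | infer _ ha => exact (ha.sound_regular hΓ).1
end

/-- Correctness of the bidirectional type system, inference part:
    if `Γ ⊢ a ⇒ A` and `⊢ Γ`, then `Γ ⊢ a : A`. -/
theorem infers_sound {Γ : Ctx} {a A : Tm}
    (h : Infers Γ a A) (hΓ : CtxWf Γ) : HasType Γ a A := by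
  exact (h.sound_regular hΓ).1
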